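/- Let R = 𝔽_2[x]/(x^51 − 1), f_1 = x^24 + x^23 + x^21 + x^19 + x^18 + x^15 + x^14 + x^13 + x^12 + x^11 + x^9 + x^8 + x^6 + x^4 + 1, f_2 = (x^51 − 1)/(x^2 + x + 1), and g = x^50 + x^49 + x^48 + x^46 + x^44 + x^43 + x^42 + x^41 + x^38 + x^37 + x^36 + x^34 + x^32 + x^29 + x^27 + x^25 + x^24 + x^19 + x^17 + x^15 + x^13 + x^12 + x^10 + x^8 + x^5 + x + 1, all regarded in R. Let C = {(c_1, c_1·g + c_2) : c_1 ∈ (f_1), c_2 ∈ (f_2)} ⊆ R^2, where (f_i) denotes the ideal of R generated by f_i. Then, under the coefficient identification R^2 ≅ 𝔽_2^{102}, C is an 𝔽_2-linear code of length 102 and dimension 29 in which every nonzero codeword has Hamming weight at least 28. -/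

import Mathlib

open Polynomial

/-- `R = F[x]/(x^m - 1)` -/
abbrev Rng (F : Type*) [Field F] (m : ℕ) : Type _ := AdjoinRoot (X ^ m - 1 : F[X])

theorem monicXm {F : Type*} [Field F] {m : ℕ} (hm : m ≠ 0) :
    (X ^ m - 1 : F[X]).Monic := by
  simpa using Polynomial.monic_X_pow_sub_C (1 : F) hm

/-- Hamming weight of an element of `R` under the coefficient identification
`R ≅ F^m`: the number of nonzero coefficients of the canonical representative
of degree `< m`. -/
noncomputable def wt {F : Type*} [Field F] {m : ℕ} (hm : m ≠ 0) (r : Rng F m) : ℕ :=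
  (AdjoinRoot.modByMonicHom (monicXm hm) r).support.card

/-- `R`-Hamming weight of a vector over `R`: the number of nonzero coordinates. -/
noncomputable def rwt {R : Type*} [Zero R] {l : ℕ} (v : Fin l → R) : ℕ :=
  Nat.card {j // v j ≠ 0}

noncomputable def f₁ : Rng (ZMod 2) 51 :=
  AdjoinRoot.mk _ (X ^ 24 + X ^ 23 + X ^ 21 + X ^ 19 + X ^ 18 + X ^ 15 + X ^ 14 +
    X ^ 13 + X ^ 12 + X ^ 11 + X ^ 9 + X ^ 8 + X ^ 6 + X ^ 4 + 1)

noncomputable def f₂ : Rng (ZMod 2) 51 :=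
  AdjoinRoot.mk _ ((X ^ 51 - 1) /ₘ (X ^ 2 + X + 1))

noncomputable def g : Rng (ZMod 2) 51 :=
  AdjoinRoot.mk _ (X ^ 50 + X ^ 49 + X ^ 48 + X ^ 46 + X ^ 44 + X ^ 43 + X ^ 42 +
    X ^ 41 + X ^ 38 + X ^ 37 + X ^ 36 + X ^ 34 + X ^ 32 + X ^ 29 + X ^ 27 + X ^ 25 +
    X ^ 24 + X ^ 19 + X ^ 17 + X ^ 15 + X ^ 13 + X ^ 12 + X ^ 10 + X ^ 8 + X ^ 5 +
    X + 1)

/-!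
If a codeword `(c₁, c₁ * g + c₂)` has weight less than `28`, one of its halves has weight at most
`13`. As `g` is invertible modulo the check polynomial `h` of `f₁`, and `(f₂) ⊆ (f₁)`, the first
half is in turn of the form `d * g⁻¹ + c₂'` in terms of the second half `d`, so the two halves
play symmetric roles. The code is invariant under simultaneous cyclic shifts of both halves, and
averaging over the `51` shifts makes at most `27 * 13 / 51 < 7` of the first `27` coefficients of
the light half nonzero. Since `deg h = 27`, these coefficients determine that half by a linear
recurrence, while `c₂` is determined by two bits. This leaves `4 * 397594` words for either choice
of the light half. Their weights are evaluated by bit slicing: the `i`-th coefficients of all the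
words are packed into one natural number, so that a few bitwise operations act on all the words at
once.
-/

section Shear

variable (F : Type*) {R : Type*} [Field F] [CommRing R] [Algebra F R]

/-- The parametrisation `(c₁, c₂) ↦ (c₁, c₁ * γ + c₂)` of the code attached to two ideals `I`, `J`
and a multiplier `γ`. -/
def shearMap (I J : Ideal R) (γ : R) : I × J →ₗ[F] R × R :=
  ((LinearEquiv.refl F R).skewProd (LinearEquiv.refl F R) (LinearMap.mulRight F γ)).toLinearMap ∘ₗ
    (I.subtype.restrictScalars F).prodMap (J.subtype.restrictScalars F)

variable {F}

theorem shearMap_injective (I J : Ideal R) (γ : R) : Function.Injective (shearMap F I J γ) :=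
  (LinearEquiv.skewProd _ _ _).injective.comp
    (Prod.map_injective.mpr ⟨Subtype.val_injective, Subtype.val_injective⟩)

theorem mem_range_shearMap {I J : Ideal R} {γ : R} {v : R × R} :
    v ∈ LinearMap.range (shearMap F I J γ) ↔ ∃ c₁ ∈ I, ∃ c₂ ∈ J, v = (c₁, c₁ * γ + c₂) := by
  simp [shearMap, add_comm, eq_comm]

theorem finrank_range_shearMap [FiniteDimensional F R] (I J : Ideal R) (γ : R) :
    Module.finrank F (LinearMap.range (shearMap F I J γ)) =
      Module.finrank F I + Module.finrank F J := by
  rw [LinearMap.finrank_range_of_inj (shearMap_injective I J γ)]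
  exact Module.finrank_prod (R := F) (M := I.restrictScalars F) (M' := J.restrictScalars F)

end Shear

section CheckPolynomial

theorem mk_mul_eq_zero_of_mem_span {R : Type*} [CommRing R] {P f h : R[X]} (hfh : f * h = P)
    {c : AdjoinRoot P} (hc : c ∈ Ideal.span {AdjoinRoot.mk P f}) : AdjoinRoot.mk P h * c = 0 := by
  obtain ⟨a, rfl⟩ := Ideal.mem_span_singleton'.mp hc
  rw [mul_left_comm, ← map_mul, mul_comm h, hfh, AdjoinRoot.mk_self, mul_zero]

theorem finrank_span_mk_of_mul_eq {F : Type*} [Field F] {P f h : F[X]} (hP : P ≠ 0)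
    (hfh : f * h = P) :
    Module.finrank F (Ideal.span {AdjoinRoot.mk P f}) = h.natDegree := by
  have hf : f ≠ 0 := by rintro rfl; exact hP (by simp [← hfh])
  let φ : F[X] →ₗ[F] AdjoinRoot P :=
    LinearMap.mulRight F (AdjoinRoot.mk P f) ∘ₗ (AdjoinRoot.mkₐ P).toLinearMap
  have ker_eq : LinearMap.ker φ = (Ideal.span {h}).restrictScalars F := by
    ext a
    simp [φ, Ideal.mem_span_singleton, ← map_mul, AdjoinRoot.mk_eq_zero, ← hfh, mul_comm a,
      mul_dvd_mul_iff_left hf]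
  have range_eq : LinearMap.range φ = (Ideal.span {AdjoinRoot.mk P f}).restrictScalars F := by
    ext c
    simp [φ, Ideal.mem_span_singleton', (AdjoinRoot.mk_surjective (g := P)).exists]
  calc Module.finrank F (Ideal.span {AdjoinRoot.mk P f})
      = Module.finrank F (LinearMap.range φ) := by rw [range_eq]; rfl
    _ = Module.finrank F (F[X] ⧸ LinearMap.ker φ) := φ.quotKerEquivRange.symm.finrank_eq
    _ = Module.finrank F (F[X] ⧸ Ideal.span {h}) := by
      rw [ker_eq]; exact (Submodule.Quotient.restrictScalarsEquiv F _).finrank_eq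
    _ = h.natDegree := finrank_quotient_span_eq_natDegree

end CheckPolynomial

section HammingWeight

open Finset

variable {β : Type*} [Zero β] [DecidableEq β]

theorem hammingNorm_eq_card_filter_range {m : ℕ} [NeZero m] (v : ZMod m → β) :
    hammingNorm v = #{n ∈ range m | v (n : ℕ) ≠ 0} := by
  refine card_nbij' ZMod.val Nat.cast ?_ ?_ ?_ ?_
  · simp +contextual [Set.MapsTo, ZMod.val_lt]
  · simp +contextual [Set.MapsTo]
  · simp [Set.LeftInvOn]
  · simp +contextual [Set.LeftInvOn, Set.RightInvOn, Nat.mod_eq_of_lt]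

theorem hammingNorm_comp_equiv {ι κ : Type*} [Fintype ι] [Fintype κ] (e : ι ≃ κ) (v : κ → β) :
    hammingNorm (fun i => v (e i)) = hammingNorm v := by
  simp only [hammingNorm, card_filter]
  exact e.sum_comp fun i => if v i ≠ 0 then 1 else 0

theorem exists_card_mul_card_filter_sub_ne_zero_le {ι G : Type*} [AddGroup G] [Fintype G]
    (T : Finset ι) (f : ι → G) (v : G → β) :
    ∃ s, Fintype.card G * #{i ∈ T | v (f i - s) ≠ 0} ≤ #T * hammingNorm v := by
  have sum_eq : ∑ s, #{i ∈ T | v (f i - s) ≠ 0} = #T * hammingNorm v := by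
    simp only [hammingNorm, card_filter]
    rw [sum_comm]
    exact sum_const_nat fun i _ =>
      (Equiv.subLeft (f i)).sum_comp fun j => if v j ≠ 0 then 1 else 0
  obtain ⟨s, -, hs⟩ := exists_le_of_sum_le (s := (univ : Finset G)) univ_nonempty
    (f := fun s => Fintype.card G * #{i ∈ T | v (f i - s) ≠ 0})
    (g := fun _ => #T * hammingNorm v) (by simp [← mul_sum, sum_eq])
  exact ⟨s, hs⟩

end HammingWeight

namespace Rng

variable {F : Type*} [Field F] {m : ℕ}

theorem mk_X_pow_mod (n : ℕ) :
    AdjoinRoot.mk (X ^ m - 1 : F[X]) (X ^ (n % m)) = AdjoinRoot.mk _ (X ^ n) := by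
  have mk_X_pow_self : AdjoinRoot.mk (X ^ m - 1 : F[X]) (X ^ m) = 1 := by
    rw [← sub_eq_zero, ← map_one (AdjoinRoot.mk _), ← map_sub, AdjoinRoot.mk_self]
  conv_rhs => rw [← Nat.mod_add_div n m, pow_add, pow_mul, map_mul, map_pow _ (X ^ m),
    mk_X_pow_self, one_pow, mul_one]

variable [NeZero m]

/-- The coefficients of an element of `F[x]/(x^m - 1)`, indexed cyclically. -/
noncomputable def coord : Rng F m →ₗ[F] ZMod m → F :=
  LinearMap.pi fun i => lcoeff F i.val ∘ₗ AdjoinRoot.modByMonicHom (monicXm (NeZero.ne m))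

theorem coeff_modByMonicHom (hm : m ≠ 0) (r : Rng F m) (n : ℕ) :
    (AdjoinRoot.modByMonicHom (monicXm hm) r).coeff n = if n < m then coord r n else 0 := by
  split_ifs with hn
  · simp [coord, ZMod.val_cast_of_lt hn]
  · obtain ⟨p, rfl⟩ := AdjoinRoot.mk_surjective r
    rw [AdjoinRoot.modByMonicHom_mk]
    refine coeff_eq_zero_of_degree_lt ((degree_modByMonic_lt p (monicXm hm)).trans_le ?_)
    simpa using degree_le_of_natDegree_le <|
      (natDegree_X_pow_sub_C (r := (1 : F))).le.trans (not_lt.mp hn)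

theorem wt_eq_hammingNorm_coord [DecidableEq F] (hm : m ≠ 0) (r : Rng F m) :
    wt hm r = hammingNorm (coord r) := by
  rw [hammingNorm_eq_card_filter_range, wt]
  refine congrArg Finset.card (Finset.ext fun n => ?_)
  rw [mem_support_iff, coeff_modByMonicHom hm]
  simp

theorem coord_injective : Function.Injective (coord : Rng F m → ZMod m → F) := fun r s h =>
  (AdjoinRoot.mk_leftInverse (monicXm (NeZero.ne m))).injective <| by
    ext n
    simp only [coeff_modByMonicHom (NeZero.ne m), h]

theorem coord_mk_X_pow (n : ℕ) (i : ZMod m) :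
    coord (AdjoinRoot.mk (X ^ m - 1 : F[X]) (X ^ n)) i = if (n : ZMod m) = i then 1 else 0 := by
  have hn : n % m < m := Nat.mod_lt n (NeZero.pos m)
  have mod_eq : (X ^ (n % m) : F[X]) %ₘ (X ^ m - 1) = X ^ (n % m) := by
    rw [modByMonic_eq_self_iff (monicXm (NeZero.ne m)), degree_X_pow]
    simpa using Nat.cast_lt.mpr hn |>.trans_eq (degree_X_pow_sub_C (NeZero.pos m) (1 : F)).symm
  have coord_eq : coord (AdjoinRoot.mk (X ^ m - 1 : F[X]) (X ^ n)) i =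
      (X ^ (n % m) : F[X]).coeff i.val := by
    rw [← mk_X_pow_mod]
    simp only [coord, LinearMap.pi_apply, LinearMap.comp_apply, lcoeff_apply,
      AdjoinRoot.modByMonicHom_mk, mod_eq]
  simp only [coord_eq, coeff_X_pow, ← ZMod.val_natCast, (ZMod.val_injective m).eq_iff,
    eq_comm (a := i)]

theorem coord_mk_monomial (n : ℕ) (a : F) (i : ZMod m) :
    coord (AdjoinRoot.mk (X ^ m - 1 : F[X]) (monomial n a)) i =
      if (n : ZMod m) = i then a else 0 := by
  rw [← smul_X_eq_monomial, ← AdjoinRoot.smul_mk, map_smul, Pi.smul_apply, coord_mk_X_pow]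
  simp

theorem coord_X_pow_mul (k : ℕ) (r : Rng F m) (i : ZMod m) :
    coord (AdjoinRoot.mk _ (X ^ k) * r) i = coord r (i - k) := by
  obtain ⟨p, rfl⟩ := AdjoinRoot.mk_surjective r
  rw [← map_mul]
  induction p using Polynomial.induction_on' with
  | add p q hp hq => simp only [mul_add, map_add, Pi.add_apply, hp, hq]
  | monomial n a =>
    rw [X_pow_mul, monomial_mul_X_pow, coord_mk_monomial, coord_mk_monomial]
    simp [eq_sub_iff_add_eq]

end Rng

section ExponentList

open Rng

/-- The sum of the monomials `X ^ e` over the exponents `e` in the list `E`; over `ZMod 2` every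
polynomial has this form. -/
noncomputable def ofExponents (F : Type*) [Semiring F] (E : List ℕ) : F[X] :=
  (E.map fun e => X ^ e).sum

variable {F : Type*} [Field F] {m : ℕ} [NeZero m]

theorem coord_ofExponents_mul (E : List ℕ) (r : Rng F m) (i : ZMod m) :
    coord (AdjoinRoot.mk _ (ofExponents F E) * r) i = (E.map fun e : ℕ => coord r (i - e)).sum := by
  induction E with
  | nil => simp [ofExponents]
  | cons e E ih =>
    rw [ofExponents] at ih ⊢
    simp [add_mul, coord_X_pow_mul, ih, -map_pow]

theorem coord_eq_sum_of_ofExponents_mul_eq_zero [CharP F 2] {E : List ℕ} {r : Rng F m}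
    (h : AdjoinRoot.mk _ (ofExponents F (0 :: E)) * r = 0) (i : ZMod m) :
    coord r i = (E.map fun e : ℕ => coord r (i - e)).sum := by
  have := coord_ofExponents_mul (0 :: E) r i
  rw [h, map_zero] at this
  rw [← CharTwo.add_eq_zero]
  simpa using this.symm

end ExponentList

namespace BitSlice

/-- The bit of `a` at position `p`, as an element of `𝔽₂`. A list of natural numbers is used here
as a binary matrix whose `p`-th column consists of the `p`-th bits of its entries. -/
def bit (p a : ℕ) : ZMod 2 := if a.testBit p then 1 else 0

theorem bit_ne_zero {p a : ℕ} : bit p a ≠ 0 ↔ a.testBit p := by simp [bit]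

theorem bit_zero (p : ℕ) : bit p 0 = 0 := by simp [bit]

theorem bit_xor (p a b : ℕ) : bit p (a ^^^ b) = bit p a + bit p b := by
  simp only [bit, Nat.testBit_xor]
  cases a.testBit p <;> cases b.testBit p <;> rfl

/-- The bitwise sum of a list of words. -/
def xorSum (ws : List ℕ) : ℕ := ws.foldr (· ^^^ ·) 0

theorem bit_xorSum (p : ℕ) (ws : List ℕ) : bit p (xorSum ws) = (ws.map (bit p)).sum := by
  induction ws with
  | nil => simp [xorSum, bit]
  | cons w ws ih => rw [List.map_cons, List.sum_cons, ← ih, ← bit_xor]; rfl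

section Counter

/-- The bitwise disjunction of a list of words. -/
def orSum (ws : List ℕ) : ℕ := ws.foldr (· ||| ·) 0

theorem testBit_orSum {p w : ℕ} {ws : List ℕ} (hw : w ∈ ws) (hp : w.testBit p) :
    (orSum ws).testBit p := by
  induction ws with
  | nil => simp at hw
  | cons a ws ih =>
    rw [orSum, List.foldr_cons, Nat.testBit_or, Bool.or_eq_true]
    obtain rfl | hw := List.mem_cons.mp hw
    exacts [Or.inl hp, Or.inr (ih hw)]

theorem testBit_foldr_and {p a : ℕ} {ss : List ℕ} (h : (ss.foldr (· &&& ·) a).testBit p) :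
    ∀ s ∈ ss, s.testBit p := by
  induction ss with
  | nil => simp
  | cons s ss ih =>
    rw [List.foldr_cons, Nat.testBit_and, Bool.and_eq_true] at h
    exact List.forall_mem_cons.mpr ⟨h.1, ih h.2⟩

/-- Insert the bits of `b` into a family of unary counters: in every column, a set bit of `b` is
moved to the first row in which that column is not yet set, and dropped if there is none. -/
def insertBit : List ℕ → ℕ → List ℕ
  | [], _ => []
  | s :: ss, b => (s ||| b) :: insertBit ss (s &&& b)

theorem length_foldl_insertBit (ws ss : List ℕ) : (ws.foldl insertBit ss).length = ss.length := by
  have length_insertBit (b : ℕ) (ss : List ℕ) : (insertBit ss b).length = ss.length := by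
    induction ss generalizing b with
    | nil => rfl
    | cons s ss ih => simp [insertBit, ih]
  induction ws generalizing ss with
  | nil => rfl
  | cons w ws ih => rw [List.foldl_cons, ih, length_insertBit]

theorem countP_testBit_insertBit_le (p b : ℕ) (ss : List ℕ) :
    (insertBit ss b).countP (·.testBit p) ≤ ss.countP (·.testBit p) + (b.testBit p).toNat := by
  induction ss generalizing b with
  | nil => simp [insertBit]
  | cons s ss ih =>
    have := ih (s &&& b)
    simp only [insertBit, List.countP_cons, Nat.testBit_or, Nat.testBit_and] at this ⊢
    cases hs : s.testBit p <;> cases hb : b.testBit p <;> simp [hs, hb] at this ⊢ <;> omega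

theorem countP_testBit_foldl_insertBit_le (p : ℕ) (ws ss : List ℕ) :
    (ws.foldl insertBit ss).countP (·.testBit p) ≤
      ss.countP (·.testBit p) + ws.countP (·.testBit p) := by
  induction ws generalizing ss with
  | nil => simp
  | cons w ws ih =>
    have h₁ := ih (insertBit ss w)
    have h₂ := countP_testBit_insertBit_le p w ss
    rw [List.foldl_cons, List.countP_cons]
    cases hw : w.testBit p <;> simp [hw] at h₂ ⊢ <;> omega

/-- A bit-parallel test, over all columns of `ws` at once, that every nonzero column has weight at
least `d`. -/
abbrev ColumnsMinWeight (d : ℕ) (ws : List ℕ) : Prop :=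
  orSum ws = (ws.foldl insertBit (List.replicate d 0)).foldr (· &&& ·) (orSum ws)

theorem ColumnsMinWeight.countP_testBit {d : ℕ} {ws : List ℕ} (h : ColumnsMinWeight d ws) (p : ℕ) :
    ws.countP (·.testBit p) = 0 ∨ d ≤ ws.countP (·.testBit p) := by
  rw [or_iff_not_imp_left, ← ne_eq, ← Nat.pos_iff_ne_zero, List.countP_pos_iff]
  rintro ⟨w, hw, hp⟩
  have full : ∀ s ∈ ws.foldl insertBit (List.replicate d 0), s.testBit p :=
    testBit_foldr_and (h ▸ testBit_orSum hw hp)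
  calc d = (ws.foldl insertBit (List.replicate d 0)).countP (·.testBit p) := by
        rw [List.countP_eq_length.mpr full, length_foldl_insertBit, List.length_replicate]
    _ ≤ (List.replicate d 0).countP (·.testBit p) + ws.countP (·.testBit p) :=
        countP_testBit_foldl_insertBit_le p ws _
    _ = ws.countP (·.testBit p) := by simp [List.countP_replicate]

end Counter

section LowWeight

/-- The word whose bits below position `l` are set. -/
def ones (l : ℕ) : ℕ := (1 <<< l) - 1

theorem bit_ones {p l : ℕ} (hp : p < l) : bit p (ones l) = 1 := by
  simp [bit, ones, Nat.one_shiftLeft, Nat.testBit_two_pow_sub_one, hp]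

theorem exists_mem_bit_eq (l : ℕ) (x : ZMod 2) : ∃ u ∈ [0, ones l], ∀ p < l, bit p u = x := by
  fin_cases x
  · exact ⟨0, by simp, fun p _ => bit_zero p⟩
  · exact ⟨ones l, by simp, fun p hp => bit_ones hp⟩

/-- Juxtapose two words, the first of which has length `l`. -/
def juxtapose (l a b : ℕ) : ℕ := a ||| b <<< l

theorem juxtapose_lt {l l' a b : ℕ} (ha : a < 2 ^ l) (hb : b < 2 ^ l') :
    juxtapose l a b < 2 ^ (l + l') := by
  refine Nat.or_lt_two_pow (ha.trans_le (Nat.pow_le_pow_right two_pos (Nat.le_add_right _ _))) ?_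
  rw [Nat.shiftLeft_eq, pow_add, mul_comm]
  exact Nat.mul_lt_mul_of_pos_left hb (Nat.two_pow_pos l)

theorem bit_juxtapose_of_lt {p l : ℕ} (hp : p < l) (a b : ℕ) :
    bit p (juxtapose l a b) = bit p a := by
  simp [bit, juxtapose, Nat.testBit_shiftLeft, hp.not_ge]

theorem bit_juxtapose_add {l a : ℕ} (ha : a < 2 ^ l) (b p : ℕ) :
    bit (l + p) (juxtapose l a b) = bit p b := by
  have : a.testBit (l + p) = false :=
    Nat.testBit_lt_two_pow (ha.trans_le (Nat.pow_le_pow_right two_pos (Nat.le_add_right l p)))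
  simp [bit, juxtapose, Nat.testBit_shiftLeft, this]

/-- The number of binary words of length `n` and weight at most `k`. -/
def lowWeightCount : ℕ → ℕ → ℕ
  | 0, _ => 1
  | _ + 1, 0 => 1
  | n + 1, k + 1 => lowWeightCount n (k + 1) + lowWeightCount n k

/-- The `i`-th row of the matrix whose columns are the binary words of length `n` and weight at
most `k`: first those starting with `0`, then those starting with `1`. -/
def lowWeightRow : ℕ → ℕ → ℕ → ℕ
  | 0, _, _ => 0
  | _ + 1, 0, _ => 0
  | n + 1, k + 1, 0 => juxtapose (lowWeightCount n (k + 1)) 0 (ones (lowWeightCount n k))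
  | n + 1, k + 1, i + 1 =>
    juxtapose (lowWeightCount n (k + 1)) (lowWeightRow n (k + 1) i) (lowWeightRow n k i)

theorem lowWeightRow_lt (n k i : ℕ) : lowWeightRow n k i < 2 ^ lowWeightCount n k := by
  fun_induction lowWeightRow n k i with
  | case1 => simp
  | case2 => simp
  | case3 n k =>
    exact juxtapose_lt (Nat.two_pow_pos _) (by simp [ones, Nat.one_shiftLeft])
  | case4 n k i ih₁ ih₂ => exact juxtapose_lt ih₁ ih₂

open Finset in
theorem exists_bit_lowWeightRow_eq (n k : ℕ) (v : ℕ → ZMod 2) (hv : #{i ∈ range n | v i ≠ 0} ≤ k) :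
    ∃ p < lowWeightCount n k, ∀ i < n, bit p (lowWeightRow n k i) = v i := by
  induction n generalizing k v with
  | zero => exact ⟨0, by simp [lowWeightCount]⟩
  | succ n ih =>
    cases k with
    | zero =>
      have v_eq_zero : ∀ i < n + 1, v i = 0 := by simpa [filter_eq_empty_iff] using hv
      refine ⟨0, by simp [lowWeightCount], fun i hi => ?_⟩
      rw [lowWeightRow, bit_zero, v_eq_zero i hi]
    | succ k =>
      have card_succ : #{i ∈ range (n + 1) | v i ≠ 0} =
          #{i ∈ range n | v (i + 1) ≠ 0} + if v 0 ≠ 0 then 1 else 0 := by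
        simp only [card_filter, sum_range_succ']
      rw [card_succ] at hv
      obtain hv₀ | hv₀ := eq_or_ne (v 0) 0
      · obtain ⟨p, hp, hpv⟩ := ih (k + 1) (fun i => v (i + 1)) (by simpa [hv₀] using hv)
        refine ⟨p, hp.trans_le (Nat.le_add_right _ _), fun i hi => ?_⟩
        cases i with
        | zero => rw [lowWeightRow, bit_juxtapose_of_lt hp, bit_zero, hv₀]
        | succ i => rw [lowWeightRow, bit_juxtapose_of_lt hp, hpv i (by lia)]
      · obtain ⟨p, hp, hpv⟩ := ih k (fun i => v (i + 1)) (by simpa [hv₀] using hv)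
        refine ⟨lowWeightCount n (k + 1) + p, Nat.add_lt_add_left hp _, fun i hi => ?_⟩
        cases i with
        | zero =>
          have hv₀_one : v 0 = 1 := Fin.eq_one_of_ne_zero _ hv₀
          rw [lowWeightRow, bit_juxtapose_add (Nat.two_pow_pos _), bit_ones hp, hv₀_one]
        | succ i => rw [lowWeightRow, bit_juxtapose_add (lowWeightRow_lt _ _ _), hpv i (by lia)]

end LowWeight

/-- The rows `ws` agree, in the column `p`, with the cyclic word `v`. -/
def Carries {m : ℕ} (p : ℕ) (ws : List ℕ) (v : ZMod m → ZMod 2) : Prop :=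
  ∀ i < ws.length, bit p (ws.getD i 0) = v i

section Codewords

variable {m p : ℕ}

theorem Carries.countP_testBit [NeZero m] {ws : List ℕ} {v : ZMod m → ZMod 2} (h : Carries p ws v)
    (hm : ws.length = m) : ws.countP (·.testBit p) = hammingNorm v := by
  have ws_eq : ws = (List.range m).map (ws.getD · 0) :=
    List.ext_getElem (by simp [hm]) fun i hi _ => by simp [hi]
  rw [hammingNorm_eq_card_filter_range, ws_eq, List.countP_map, List.countP_eq_length_filter]
  refine congrArg List.length (List.filter_congr fun i hi => ?_)
  rw [Bool.eq_iff_iff, decide_eq_true_iff]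
  exact bit_ne_zero.symm.trans (by rw [h i (hm.symm ▸ List.mem_range.mp hi)])

/-- Prolong a list of rows by the linear recurrence `w n = ∑ e ∈ taps, w (n - e)`. -/
def lfsr (taps init : List ℕ) : ℕ → List ℕ
  | 0 => init
  | n + 1 =>
    let ws := lfsr taps init n
    ws ++ [xorSum (taps.map fun e => ws.getD (ws.length - e) 0)]

theorem length_lfsr (taps init : List ℕ) (n : ℕ) :
    (lfsr taps init n).length = init.length + n := by
  induction n with
  | zero => rfl
  | succ n ih => rw [lfsr, List.length_append, ih]; rfl

theorem Carries.append_singleton {ws : List ℕ} {v : ZMod m → ZMod 2} (h : Carries p ws v) {w : ℕ}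
    (hw : bit p w = v ws.length) : Carries p (ws ++ [w]) v := by
  intro i hi
  rw [List.length_append, List.length_singleton] at hi
  obtain hi | rfl := Nat.lt_succ_iff_lt_or_eq.mp hi
  · rw [List.getD_append _ _ _ _ hi, h i hi]
  · simpa using hw

theorem carries_lfsr {taps init : List ℕ} {v : ZMod m → ZMod 2} (h : Carries p init v)
    (htaps : ∀ e ∈ taps, 0 < e ∧ e ≤ init.length)
    (hv : ∀ i, v i = (taps.map fun e : ℕ => v (i - e)).sum) (n : ℕ) :
    Carries p (lfsr taps init n) v := by
  induction n with
  | zero => exact h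
  | succ n ih =>
    refine ih.append_singleton ?_
    rw [bit_xorSum, hv, List.map_map]
    refine congrArg List.sum (List.map_congr_left fun e he => ?_)
    have he_le : e ≤ (lfsr taps init n).length := by
      rw [length_lfsr]; exact (htaps e he).2.trans (Nat.le_add_right _ _)
    rw [Function.comp_apply, ih _ (Nat.sub_lt_self (htaps e he).1 he_le), Nat.cast_sub he_le]

/-- The cyclic convolution, of length `m`, of the rows `cs` with the exponent list `E`, added to the
rows `bs`. -/
def convolveAdd (m : ℕ) (E cs bs : List ℕ) : List ℕ :=
  (List.range m).map fun j =>
    xorSum (bs.getD j 0 :: E.map fun e : ℕ => cs.getD ((j : ZMod m) - e).val 0)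

theorem carries_convolveAdd [NeZero m] {cs bs : List ℕ} {c b d : ZMod m → ZMod 2} {E : List ℕ}
    (hc : Carries p cs c) (hb : Carries p bs b) (hcm : cs.length = m) (hbm : bs.length = m)
    (hd : ∀ i, d i = b i + (E.map fun e : ℕ => c (i - e)).sum) :
    Carries p (convolveAdd m E cs bs) d := by
  intro j hj
  have hjm : j < m := by simpa [convolveAdd] using hj
  have bit_eq (i : ZMod m) : bit p (cs.getD i.val 0) = c i := by
    rw [hc _ (hcm ▸ i.val_lt), ZMod.natCast_rightInverse]
  rw [List.getD_eq_getElem _ _ hj]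
  simp only [convolveAdd, List.getElem_map, List.getElem_range, bit_xorSum, List.map_cons,
    List.sum_cons, hb j (hbm.symm ▸ hjm), hd, List.map_map, Function.comp_def, bit_eq]

end Codewords

end BitSlice

section Polynomials

/-- The nonzero exponents of the check polynomial `(x⁵¹ - 1) / f₁`. -/
def checkTaps₁ : List ℕ := [4, 6, 9, 11, 12, 13, 15, 17, 18, 21, 22, 23, 25, 26, 27]

/-- The nonzero exponents of the check polynomial `(x⁵¹ - 1) / f₂ = x² + x + 1`. -/
def checkTaps₂ : List ℕ := [1, 2]

/-- The exponents of `g`. -/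
def gExponents : List ℕ :=
  [50, 49, 48, 46, 44, 43, 42, 41, 38, 37, 36, 34, 32, 29, 27, 25, 24, 19, 17, 15, 13, 12, 10, 8, 5,
    1, 0]

/-- The exponents of an inverse of `g` modulo the check polynomial of `f₁`. -/
def gInvExponents : List ℕ := [0, 20, 24, 32, 34, 36, 42]

/-- The check polynomial `(x⁵¹ - 1) / f₁`. -/
noncomputable def checkPoly₁ : (ZMod 2)[X] := ofExponents (ZMod 2) (0 :: checkTaps₁)

/-- The check polynomial `(x⁵¹ - 1) / f₂`. -/
noncomputable def checkPoly₂ : (ZMod 2)[X] := ofExponents (ZMod 2) (0 :: checkTaps₂)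

/-- An inverse of `g` modulo the check polynomial of `f₁`. -/
noncomputable def gInv : Rng (ZMod 2) 51 := AdjoinRoot.mk _ (ofExponents (ZMod 2) gInvExponents)

theorem mk_ofExponents_gExponents :
    AdjoinRoot.mk _ (ofExponents (ZMod 2) gExponents) = g := by
  simp [g, ofExponents, gExponents, add_assoc]

theorem mul_checkPoly₁ :
    (X ^ 24 + X ^ 23 + X ^ 21 + X ^ 19 + X ^ 18 + X ^ 15 + X ^ 14 + X ^ 13 + X ^ 12 + X ^ 11 +
      X ^ 9 + X ^ 8 + X ^ 6 + X ^ 4 + 1) * checkPoly₁ = X ^ 51 - 1 := by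
  simp only [checkPoly₁, ofExponents, checkTaps₁, List.map_cons, List.map_nil, List.sum_cons,
    List.sum_nil]
  ring_nf
  reduce_mod_char

theorem checkPoly₂_dvd_checkPoly₁ : checkPoly₂ ∣ checkPoly₁ := by
  refine ⟨ofExponents (ZMod 2) [0, 1, 3, 5, 7, 8, 9, 12, 14, 16, 21, 25], ?_⟩
  simp only [checkPoly₁, checkPoly₂, ofExponents, checkTaps₁, checkTaps₂, List.map_cons,
    List.map_nil, List.sum_cons, List.sum_nil]
  ring_nf
  reduce_mod_char

theorem checkPoly₁_dvd_gExponents_mul_gInvExponents_sub_one :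
    checkPoly₁ ∣ ofExponents (ZMod 2) gExponents * ofExponents (ZMod 2) gInvExponents - 1 := by
  refine ⟨ofExponents (ZMod 2) [1, 7, 8, 11, 12, 13, 16, 18, 19, 20, 21, 23, 24, 26, 27, 31, 32, 35,
    37, 38, 40, 41, 43, 47, 51, 56, 58, 60, 65], ?_⟩
  simp only [checkPoly₁, ofExponents, checkTaps₁, gExponents, gInvExponents, List.map_cons,
    List.map_nil, List.sum_cons, List.sum_nil]
  ring_nf
  reduce_mod_char

theorem divByMonic_mul_checkPoly₂ : (X ^ 51 - 1) /ₘ (X ^ 2 + X + 1) * checkPoly₂ = X ^ 51 - 1 := by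
  have checkPoly₂_eq : checkPoly₂ = X ^ 2 + X + 1 := by
    simp only [checkPoly₂, ofExponents, checkTaps₂, List.map_cons, List.map_nil, List.sum_cons,
      List.sum_nil]
    ring
  have dvd : X ^ 2 + X + 1 ∣ (X ^ 51 - 1 : (ZMod 2)[X]) := by
    rw [← checkPoly₂_eq, ← mul_checkPoly₁]
    exact checkPoly₂_dvd_checkPoly₁.mul_left _
  have monic : (X ^ 2 + X + 1 : (ZMod 2)[X]).Monic := by monicity!
  have div := modByMonic_add_div (X ^ 51 - 1 : (ZMod 2)[X]) (X ^ 2 + X + 1)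
  rw [checkPoly₂_eq, mul_comm]
  rwa [(modByMonic_eq_zero_iff_dvd monic).mpr dvd, zero_add] at div

theorem natDegree_checkPoly₁ : checkPoly₁.natDegree = 27 := by
  simp only [checkPoly₁, ofExponents, checkTaps₁, List.map_cons, List.map_nil, List.sum_cons,
    List.sum_nil]
  compute_degree!

theorem natDegree_checkPoly₂ : checkPoly₂.natDegree = 2 := by
  simp only [checkPoly₂, ofExponents, checkTaps₂, List.map_cons, List.map_nil, List.sum_cons,
    List.sum_nil]
  compute_degree!

theorem mk_checkPoly₁_mul_eq_zero {b : Rng (ZMod 2) 51}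
    (hb : AdjoinRoot.mk _ checkPoly₂ * b = 0) : AdjoinRoot.mk _ checkPoly₁ * b = 0 := by
  obtain ⟨k, hk⟩ := checkPoly₂_dvd_checkPoly₁
  rw [hk, map_mul, mul_right_comm, hb, zero_mul]

theorem mul_g_mul_gInv {c : Rng (ZMod 2) 51} (hc : AdjoinRoot.mk _ checkPoly₁ * c = 0) :
    c * g * gInv = c := by
  obtain ⟨t, ht⟩ := map_dvd (AdjoinRoot.mk (X ^ 51 - 1 : (ZMod 2)[X]))
    checkPoly₁_dvd_gExponents_mul_gInvExponents_sub_one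
  rw [map_sub, map_mul, mk_ofExponents_gExponents, map_one, ← gInv] at ht
  linear_combination c * ht + t * hc

end Polynomials

section LightHalf

open BitSlice
open scoped Finset

/-- The rows of a matrix whose columns are the words `(c, c * γ + b)` of length `102`, where `γ` has
exponents `E`, the word `c` runs over the multiples of `f₁` with at most `6` nonzero coefficients
among the first `27`, and `b` is the multiple of `f₂` whose first two coefficients are
given by the bits of `u` and `v`. -/
def lightRows (E : List ℕ) (u v : ℕ) : List ℕ :=
  let cs := lfsr checkTaps₁ ((List.range 27).map (lowWeightRow 27 6)) 24
  cs ++ convolveAdd 51 E cs (lfsr checkTaps₂ [u, v] 49)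

/-- Every nonzero word `(c, c * γ + b)` whose first half `c` is light on the first `27` coordinates
has weight at least `28`; here `E` lists the exponents of `γ`. -/
abbrev LightRowsMinWeight (E : List ℕ) : Prop :=
  ∀ u ∈ [0, ones (lowWeightCount 27 6)], ∀ v ∈ [0, ones (lowWeightCount 27 6)],
    ColumnsMinWeight 28 (lightRows E u v)

theorem lightRowsMinWeight_gExponents : LightRowsMinWeight gExponents := by decide +kernel

theorem lightRowsMinWeight_gInvExponents : LightRowsMinWeight gInvExponents := by decide +kernel

theorem weight_eq_zero_or_ge_of_light_window {E : List ℕ} (hE : LightRowsMinWeight E)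
    {c b d : ZMod 51 → ZMod 2} (hc : ∀ i, c i = (checkTaps₁.map fun e : ℕ => c (i - e)).sum)
    (hb : ∀ i, b i = (checkTaps₂.map fun e : ℕ => b (i - e)).sum)
    (hd : ∀ i, d i = b i + (E.map fun e : ℕ => c (i - e)).sum)
    (hlight : #{i ∈ Finset.range 27 | c (i : ℕ) ≠ 0} ≤ 6) :
    hammingNorm c + hammingNorm d = 0 ∨ 28 ≤ hammingNorm c + hammingNorm d := by
  obtain ⟨p, hp, hpc⟩ := exists_bit_lowWeightRow_eq 27 6 (fun i => c i) hlight
  obtain ⟨u, hu, hpu⟩ := exists_mem_bit_eq (lowWeightCount 27 6) (b 0)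
  obtain ⟨v, hv, hpv⟩ := exists_mem_bit_eq (lowWeightCount 27 6) (b 1)
  have window_carries : Carries p ((List.range 27).map (lowWeightRow 27 6)) c := by
    intro i hi
    rw [List.getD_eq_getElem _ _ hi, List.getElem_map, List.getElem_range]
    exact hpc i (by simpa using hi)
  have init_carries : Carries p [u, v] b := by
    intro i hi
    obtain rfl | rfl : i = 0 ∨ i = 1 := by simp at hi; lia
    exacts [by simpa using hpu p hp, by simpa using hpv p hp]
  have c_carries := carries_lfsr window_carries (by decide) hc 24
  have b_carries := carries_lfsr init_carries (by simp [checkTaps₂]) hb 49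
  have d_carries :=
    carries_convolveAdd c_carries b_carries (by simp [length_lfsr]) (by simp [length_lfsr]) hd
  rw [← c_carries.countP_testBit (by simp [length_lfsr]),
    ← d_carries.countP_testBit (by simp [convolveAdd]), ← List.countP_append]
  exact (hE u hu v hv).countP_testBit p

theorem weight_eq_zero_or_ge_of_hammingNorm_le {E : List ℕ} (hE : LightRowsMinWeight E)
    {c b d : ZMod 51 → ZMod 2} (hc : ∀ i, c i = (checkTaps₁.map fun e : ℕ => c (i - e)).sum)
    (hb : ∀ i, b i = (checkTaps₂.map fun e : ℕ => b (i - e)).sum)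
    (hd : ∀ i, d i = b i + (E.map fun e : ℕ => c (i - e)).sum) (hlight : hammingNorm c ≤ 13) :
    hammingNorm c + hammingNorm d = 0 ∨ 28 ≤ hammingNorm c + hammingNorm d := by
  obtain ⟨s, hs⟩ :=
    exists_card_mul_card_filter_sub_ne_zero_le (Finset.range 27) (Nat.cast : ℕ → ZMod 51) c
  rw [ZMod.card, Finset.card_range] at hs
  have shift (v : ZMod 51 → ZMod 2) : hammingNorm (fun i => v (i - s)) = hammingNorm v :=
    hammingNorm_comp_equiv (Equiv.subRight s) v
  rw [← shift c, ← shift d]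
  refine weight_eq_zero_or_ge_of_light_window hE (b := fun i => b (i - s)) (fun i => ?_)
    (fun i => ?_) (fun i => ?_) (by lia)
  · simp only [sub_right_comm i _ s, ← hc]
  · simp only [sub_right_comm i _ s, ← hb]
  · simp only [sub_right_comm i _ s, ← hd]

end LightHalf

section MinimumDistance

open Rng

theorem eq_zero_or_le_wt_add_wt_of_wt_le {E : List ℕ} (hE : LightRowsMinWeight E)
    {c b d : Rng (ZMod 2) 51} (hc : AdjoinRoot.mk _ checkPoly₁ * c = 0)
    (hb : AdjoinRoot.mk _ checkPoly₂ * b = 0)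
    (hd : d = c * AdjoinRoot.mk _ (ofExponents (ZMod 2) E) + b) (hm : 51 ≠ 0)
    (hlight : wt hm c ≤ 13) : (c = 0 ∧ d = 0) ∨ 28 ≤ wt hm c + wt hm d := by
  simp only [wt_eq_hammingNorm_coord] at hlight ⊢
  refine (weight_eq_zero_or_ge_of_hammingNorm_le hE (coord_eq_sum_of_ofExponents_mul_eq_zero hc)
    (coord_eq_sum_of_ofExponents_mul_eq_zero hb) (fun i => ?_) hlight).imp_left fun h => ?_
  · rw [hd, map_add, Pi.add_apply, mul_comm, coord_ofExponents_mul, add_comm]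
  · simpa [map_eq_zero_iff _ coord_injective] using h

theorem le_wt_add_wt {c₁ c₂ : Rng (ZMod 2) 51} (h₁ : c₁ ∈ Ideal.span {f₁})
    (h₂ : c₂ ∈ Ideal.span {f₂}) (hne : (c₁, c₁ * g + c₂) ≠ 0) (hm : 51 ≠ 0) :
    28 ≤ wt hm c₁ + wt hm (c₁ * g + c₂) := by
  have check_c₁ := mk_mul_eq_zero_of_mem_span mul_checkPoly₁ h₁
  have check_c₂ := mk_mul_eq_zero_of_mem_span divByMonic_mul_checkPoly₂ h₂
  by_contra! hlt
  obtain hlight | hlight : wt hm c₁ ≤ 13 ∨ wt hm (c₁ * g + c₂) ≤ 13 := by lia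
  · obtain ⟨hc₁, hd⟩ | hge := eq_zero_or_le_wt_add_wt_of_wt_le lightRowsMinWeight_gExponents
      check_c₁ check_c₂ (by rw [mk_ofExponents_gExponents]) hm hlight
    · exact hne (Prod.ext hc₁ hd)
    · exact hge.not_gt hlt
  · have check_d : AdjoinRoot.mk _ checkPoly₁ * (c₁ * g + c₂) = 0 := by
      linear_combination g * check_c₁ + mk_checkPoly₁_mul_eq_zero check_c₂
    have swap : c₁ = (c₁ * g + c₂) * gInv + -(c₂ * gInv) := by
      linear_combination -mul_g_mul_gInv check_c₁
    obtain ⟨hd, hc₁⟩ | hge := eq_zero_or_le_wt_add_wt_of_wt_le lightRowsMinWeight_gInvExponents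
      check_d (by linear_combination -gInv * check_c₂) swap hm hlight
    · exact hne (Prod.ext hc₁ hd)
    · exact hge.not_gt (by rwa [add_comm])

end MinimumDistance

/-- the code `𝒞₃ = {(c₁, c₁·g + c₂) : c₁ ∈ (f₁), c₂ ∈ (f₂)}` in
`R² ≅ 𝔽₂¹⁰²` (with `R = 𝔽₂[x]/(x⁵¹-1)`) is an `𝔽₂`-linear code of length 102 and
dimension 29, and every nonzero codeword has Hamming weight at least 28. -/
theorem stmt8 :
    ∃ W : Submodule (ZMod 2) (Rng (ZMod 2) 51 × Rng (ZMod 2) 51),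
      (W : Set (Rng (ZMod 2) 51 × Rng (ZMod 2) 51)) =
        {v | ∃ c₁ ∈ Ideal.span {f₁}, ∃ c₂ ∈ Ideal.span {f₂}, v = (c₁, c₁ * g + c₂)} ∧
      Module.finrank (ZMod 2) W = 29 ∧
      ∀ c₁ ∈ Ideal.span {f₁}, ∀ c₂ ∈ Ideal.span {f₂},
        ((c₁, c₁ * g + c₂) : Rng (ZMod 2) 51 × Rng (ZMod 2) 51) ≠ 0 →
        28 ≤ wt (by norm_num) c₁ + wt (by norm_num) (c₁ * g + c₂) := by
  have monic : (X ^ 51 - 1 : (ZMod 2)[X]).Monic := monicXm (by norm_num)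
  have : FiniteDimensional (ZMod 2) (Rng (ZMod 2) 51) := monic.finite_adjoinRoot
  refine ⟨LinearMap.range (shearMap (ZMod 2) (Ideal.span {f₁}) (Ideal.span {f₂}) g),
    Set.ext fun v => mem_range_shearMap, ?_, fun c₁ h₁ c₂ h₂ hne => le_wt_add_wt h₁ h₂ hne _⟩
  rw [finrank_range_shearMap, f₁, f₂, finrank_span_mk_of_mul_eq monic.ne_zero mul_checkPoly₁,
    finrank_span_mk_of_mul_eq monic.ne_zero divByMonic_mul_checkPoly₂, natDegree_checkPoly₁,
    natDegree_checkPoly₂]
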